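/- arXiv:1907.04585 — 4 statements merged into one kernel-verified Lean document; each statement's English description precedes it below -/
import Mathlib

section
/- Let (H,η) be an extended strip decomposition of a graph G. Suppose P1, P2, P3 are three induced paths in G that are pairwise vertex-disjoint and pairwise non-adjacent, and each of P1, P2, P3 has an endpoint that is peripheral in (H,η). Then no atom of (H,η) intersects or is adjacent to each of P1, P2, P3. -/
noncomputable section

namespace Paper

/-- The closed neighborhood `N[X]` of a set `X` of vertices. -/
def closedNbhd {V : Type} (G : SimpleGraph V) (X : Set V) : Set V :=
  {v | v ∈ X ∨ ∃ x ∈ X, G.Adj x v}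

/-- The total weight `w(X)` of a set of vertices. -/
def wsum {V : Type} (w : V → ℕ) (X : Set V) : ℕ := ∑ᶠ x ∈ X, w x

/-- `p : Fin m → V` is an induced path in `G` (on `m` vertices). -/
def InducedPathFun {V : Type} (G : SimpleGraph V) {m : ℕ} (p : Fin m → V) : Prop :=
  Function.Injective p ∧
    ∀ i j : Fin m, G.Adj (p i) (p j) ↔ ((i : ℕ) + 1 = (j : ℕ) ∨ (j : ℕ) + 1 = (i : ℕ))

/-- The vertex sets `A` and `B` are non-adjacent in `G`. -/
def NonAdj {V : Type} (G : SimpleGraph V) (A B : Set V) : Prop :=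
  ∀ x ∈ A, ∀ y ∈ B, ¬ G.Adj x y

/-- `A` intersects or is adjacent to `B` in `G`. -/
def Touches {V : Type} (G : SimpleGraph V) (A B : Set V) : Prop :=
  ∃ x ∈ A, ∃ y ∈ B, x = y ∨ G.Adj x y

/-- `T` is (the vertex set of) a triangle in `H`. -/
def IsTriangle {W : Type} (H : SimpleGraph W) (T : Set W) : Prop :=
  ∃ u v x, H.Adj u v ∧ H.Adj u x ∧ H.Adj v x ∧ T = {u, v, x}

/-- An extended strip decomposition of the graph `G`, with pattern graph `H`.
`vmap u` is `η(u)` for a vertex `u` of `H`, `emap e` is `η(e)` for an edge `e` of `H`,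
`endmap u v` is `η(uv, u)` for an edge `uv` of `H` (with distinguished endpoint `u`),
and `tmap T` is `η(T)` for a triangle `T` of `H`.  (The values of `emap`, `endmap`, `tmap`
on non-edges/non-triangles are irrelevant.) -/
structure ESD {V W : Type} (G : SimpleGraph V) (H : SimpleGraph W) where
  vmap : W → Set V
  emap : Sym2 W → Set V
  endmap : W → W → Set V
  tmap : Set W → Set V
  endmap_subset : ∀ u v, H.Adj u v → endmap u v ⊆ emap s(u, v)
  cover : ∀ x : V, (∃ u, x ∈ vmap u) ∨ (∃ e ∈ H.edgeSet, x ∈ emap e) ∨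
    (∃ T, IsTriangle H T ∧ x ∈ tmap T)
  disj_vv : ∀ u u', u ≠ u' → Disjoint (vmap u) (vmap u')
  disj_ee : ∀ e e', e ∈ H.edgeSet → e' ∈ H.edgeSet → e ≠ e' → Disjoint (emap e) (emap e')
  disj_tt : ∀ T T', IsTriangle H T → IsTriangle H T' → T ≠ T' → Disjoint (tmap T) (tmap T')
  disj_ve : ∀ u e, e ∈ H.edgeSet → Disjoint (vmap u) (emap e)
  disj_vt : ∀ u T, IsTriangle H T → Disjoint (vmap u) (tmap T)
  disj_et : ∀ e T, e ∈ H.edgeSet → IsTriangle H T → Disjoint (emap e) (tmap T)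
  fully_adj : ∀ v u u', H.Adj v u → H.Adj v u' → u ≠ u' →
    ∀ x ∈ endmap v u, ∀ y ∈ endmap v u', G.Adj x y
  edge_cond : ∀ x y, G.Adj x y →
    (∃ u, x ∈ vmap u ∧ y ∈ vmap u) ∨
    (∃ e ∈ H.edgeSet, x ∈ emap e ∧ y ∈ emap e) ∨
    (∃ T, IsTriangle H T ∧ x ∈ tmap T ∧ y ∈ tmap T) ∨
    (∃ v u u', H.Adj v u ∧ H.Adj v u' ∧ u ≠ u' ∧ x ∈ endmap v u ∧ y ∈ endmap v u') ∨
    (∃ v u, H.Adj v u ∧ ((x ∈ vmap v ∧ y ∈ endmap v u) ∨ (y ∈ vmap v ∧ x ∈ endmap v u))) ∨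
    (∃ T u u', IsTriangle H T ∧ u ∈ T ∧ u' ∈ T ∧ H.Adj u u' ∧
      ((x ∈ tmap T ∧ y ∈ endmap u u' ∩ endmap u' u) ∨
       (y ∈ tmap T ∧ x ∈ endmap u u' ∩ endmap u' u)))

/-- Names (labels) for the atoms of an extended strip decomposition with pattern graph on `W`:
`bot e = A_e^⊥`, `half u v = A_{uv}^u`, `full e = A_e^{uv}` for an edge `e = uv`,
`vert u = A_u` for a vertex `u`, and `tri T = A_T` for a triangle `T`. -/
inductive AtomLabel (W : Type) where
  | bot : Sym2 W → AtomLabel W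
  | half : W → W → AtomLabel W
  | full : Sym2 W → AtomLabel W
  | vert : W → AtomLabel W
  | tri : Set W → AtomLabel W

/-- An atom label is valid if the underlying feature is really an edge / a triangle of `H`. -/
def ValidAtom {W : Type} (H : SimpleGraph W) : AtomLabel W → Prop
  | .bot e => e ∈ H.edgeSet
  | .half u v => H.Adj u v
  | .full e => e ∈ H.edgeSet
  | .vert _ => True
  | .tri T => IsTriangle H T

/-- The vertex set of `G` corresponding to an atom label. -/
def ESD.atomSet {V W : Type} {G : SimpleGraph V} {H : SimpleGraph W} (D : ESD G H) :
    AtomLabel W → Set V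
  | .bot e => D.emap e \
      Sym2.lift ⟨fun u v => D.endmap u v ∪ D.endmap v u, fun _ _ => Set.union_comm _ _⟩ e
  | .half u v => D.vmap u ∪ (D.emap s(u, v) \ D.endmap v u)
  | .full e =>
      Sym2.lift ⟨fun u v => D.vmap u ∪ D.vmap v, fun _ _ => Set.union_comm _ _⟩ e ∪
        D.emap e ∪ ⋃ T ∈ {T : Set W | IsTriangle H T ∧ ∀ x ∈ e, x ∈ T}, D.tmap T
  | .vert u => D.vmap u
  | .tri T => D.tmap T

/-- The four atoms associated with the edge `uv` of `H`. -/
def Quad {W : Type} (u v : W) : Set (AtomLabel W) :=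
  {AtomLabel.bot s(u, v), AtomLabel.half u v, AtomLabel.half v u, AtomLabel.full s(u, v)}

/-- Two atom labels are conflicting. -/
def Conflict {W : Type} (H : SimpleGraph W) (a b : AtomLabel W) : Prop :=
  (∃ u v, H.Adj u v ∧ a ≠ b ∧ a ∈ Quad u v ∧ b ∈ Quad u v) ∨
  (∃ u v, H.Adj u v ∧
    (((a = AtomLabel.half u v ∨ a = AtomLabel.full s(u, v)) ∧ b = AtomLabel.vert u) ∨
     ((b = AtomLabel.half u v ∨ b = AtomLabel.full s(u, v)) ∧ a = AtomLabel.vert u))) ∨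
  (∃ u v v', H.Adj u v ∧ H.Adj u v' ∧ v ≠ v' ∧
    (a = AtomLabel.half u v ∨ a = AtomLabel.full s(u, v)) ∧
    (b = AtomLabel.half u v' ∨ b = AtomLabel.full s(u, v'))) ∨
  (∃ u v T, H.Adj u v ∧ IsTriangle H T ∧ u ∈ T ∧ v ∈ T ∧
    ((a = AtomLabel.full s(u, v) ∧ b = AtomLabel.tri T) ∨
     (b = AtomLabel.full s(u, v) ∧ a = AtomLabel.tri T)))

/-- A family of atoms is independent if its members are pairwise non-conflicting. -/
def IndepFamily {W : Type} (H : SimpleGraph W) (𝒜 : Set (AtomLabel W)) : Prop :=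
  ∀ a ∈ 𝒜, ∀ b ∈ 𝒜, ¬ Conflict H a b

/-- The vertex `z` of `G` is peripheral in the extended strip decomposition `D`. -/
def Peripheral {V W : Type} {G : SimpleGraph V} {H : SimpleGraph W} (D : ESD G H)
    (z : V) : Prop :=
  ∃ wz u, H.Adj wz u ∧ (∀ u', H.Adj wz u' → u' = u) ∧ D.endmap wz u = {z}

section Helpers

variable {V W : Type} {G : SimpleGraph V} {H : SimpleGraph W}

/-- Connectivity of a vertex set, expressed by cuts. -/
def CutConn (G : SimpleGraph V) (P : Set V) : Prop :=
  ∀ R : Set V, (∃ a ∈ P, a ∈ R) → (∃ b ∈ P, b ∉ R) → ∃ a ∈ P, ∃ b ∈ P, a ∈ R ∧ b ∉ R ∧ G.Adj a b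

theorem cutConn_path {m : ℕ} {p : Fin (m + 1) → V} (h : InducedPathFun G p) :
    CutConn G (Set.range p) := by
  rintro R ⟨_, ⟨i, rfl⟩, hi⟩ ⟨_, ⟨j, rfl⟩, hj⟩
  by_contra hcon
  have step : ∀ k (hk : k + 1 < m + 1),
      (p ⟨k, by omega⟩ ∈ R ↔ p ⟨k + 1, hk⟩ ∈ R) := by
    intro k hk
    have hadj : G.Adj (p ⟨k, by omega⟩) (p ⟨k + 1, hk⟩) := (h.2 _ _).2 (Or.inl rfl)
    constructor
    · intro h1
      by_contra h2
      exact hcon ⟨_, ⟨_, rfl⟩, _, ⟨_, rfl⟩, h1, h2, hadj⟩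
    · intro h1
      by_contra h2
      exact hcon ⟨_, ⟨_, rfl⟩, _, ⟨_, rfl⟩, h1, h2, hadj.symm⟩
  have all : ∀ k (hk : k < m + 1), (p ⟨k, hk⟩ ∈ R ↔ p 0 ∈ R) := by
    intro k
    induction k with
    | zero => intro hk; exact Iff.rfl
    | succ k ih => intro hk; exact (step k hk).symm.trans (ih (by omega))
  exact hj ((all j.1 j.2).2 ((all i.1 i.2).1 hi))

/-- The full atom of the edge `uv`. -/
def FullA (D : ESD G H) (u v : W) : Set V :=
  {x | x ∈ D.vmap u ∨ x ∈ D.vmap v ∨ x ∈ D.emap s(u, v) ∨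
    ∃ T, IsTriangle H T ∧ u ∈ T ∧ v ∈ T ∧ x ∈ D.tmap T}

theorem e_uniq (D : ESD G H) {e e' : Sym2 W} (he : e ∈ H.edgeSet) (he' : e' ∈ H.edgeSet) {x : V}
    (hx : x ∈ D.emap e) (hx' : x ∈ D.emap e') : e = e' := by
  by_contra hne
  exact Set.disjoint_left.1 (D.disj_ee e e' he he' hne) hx hx'

theorem v_uniq (D : ESD G H) {e e' : W} {x : V}
    (hx : x ∈ D.vmap e) (hx' : x ∈ D.vmap e') : e = e' := by
  by_contra hne
  exact Set.disjoint_left.1 (D.disj_vv e e' hne) hx hx'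

theorem t_uniq (D : ESD G H) {e e' : Set W} (he : IsTriangle H e) (he' : IsTriangle H e') {x : V}
    (hx : x ∈ D.tmap e) (hx' : x ∈ D.tmap e') : e = e' := by
  by_contra hne
  exact Set.disjoint_left.1 (D.disj_tt e e' he he' hne) hx hx'

theorem ve_no (D : ESD G H) {u : W} {e : Sym2 W} (he : e ∈ H.edgeSet) {x : V}
    (hx : x ∈ D.vmap u) (hx' : x ∈ D.emap e) : False :=
  Set.disjoint_left.1 (D.disj_ve u e he) hx hx'

theorem vt_no (D : ESD G H) {u : W} {T : Set W} (he : IsTriangle H T) {x : V}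
    (hx : x ∈ D.vmap u) (hx' : x ∈ D.tmap T) : False :=
  Set.disjoint_left.1 (D.disj_vt u T he) hx hx'

theorem et_no (D : ESD G H) {e : Sym2 W} {T : Set W} (he : e ∈ H.edgeSet) (hT : IsTriangle H T)
    {x : V} (hx : x ∈ D.emap e) (hx' : x ∈ D.tmap T) : False :=
  Set.disjoint_left.1 (D.disj_et e T he hT) hx hx'

theorem tri_pigeon {T : Set W} (hT : IsTriangle H T) {a b u v : W} (ha : a ∈ T) (hb : b ∈ T)
    (hu : u ∈ T) (hv : v ∈ T) (hab : a ≠ b) (huv : u ≠ v) : a = u ∨ a = v ∨ b = u ∨ b = v := by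
  obtain ⟨r, s, t, -, -, -, rfl⟩ := hT
  simp only [Set.mem_insert_iff, Set.mem_singleton_iff] at ha hb hu hv
  grind

theorem fullA_v (D : ESD G H) {u v t : W} (huv : H.Adj u v) {y : V} (hy : y ∈ FullA D u v)
    (h : y ∈ D.vmap t) : t = u ∨ t = v := by
  rcases hy with hy | hy | hy | ⟨T, hT, -, -, hy⟩
  · exact Or.inl (v_uniq D h hy)
  · exact Or.inr (v_uniq D h hy)
  · exact (ve_no D huv h hy).elim
  · exact (vt_no D hT h hy).elim

theorem fullA_e (D : ESD G H) {u v : W} {e : Sym2 W} (he : e ∈ H.edgeSet) (huv : H.Adj u v) {y : V}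
    (hy : y ∈ FullA D u v) (h : y ∈ D.emap e) : e = s(u, v) := by
  rcases hy with hy | hy | hy | ⟨T, hT, -, -, hy⟩
  · exact (ve_no D he hy h).elim
  · exact (ve_no D he hy h).elim
  · exact e_uniq D he huv h hy
  · exact (et_no D he hT h hy).elim

theorem fullA_t (D : ESD G H) {u v : W} {T : Set W} (hT : IsTriangle H T) (huv : H.Adj u v) {y : V}
    (hy : y ∈ FullA D u v) (h : y ∈ D.tmap T) : u ∈ T ∧ v ∈ T := by
  rcases hy with hy | hy | hy | ⟨T', hT', h1, h2, hy⟩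
  · exact (vt_no D hT hy h).elim
  · exact (vt_no D hT hy h).elim
  · exact (et_no D huv hT hy h).elim
  · obtain rfl := t_uniq D hT hT' h hy
    exact ⟨h1, h2⟩

theorem fullA_nbr (D : ESD G H) {u v : W} (huv : H.Adj u v) {x y : V} (hxy : G.Adj x y)
    (hy : y ∈ FullA D u v) (hx : x ∉ FullA D u v) :
    ∃ w w', ((w = u ∧ w' ≠ v) ∨ (w = v ∧ w' ≠ u)) ∧ H.Adj w w' ∧ x ∈ D.endmap w w' := by
  have hxe : x ∉ D.emap s(u, v) := fun h => hx (Or.inr (Or.inr (Or.inl h)))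
  have hxe' : x ∉ D.emap s(v, u) := by rwa [Sym2.eq_swap]
  rcases D.edge_cond x y hxy with ⟨t, h1, h2⟩ | ⟨e, he, h1, h2⟩ | ⟨T, hT, h1, h2⟩ |
    ⟨t, a, b, hta, htb, hab, h1, h2⟩ | ⟨t, b, htb, ⟨h1, h2⟩ | ⟨h2, h1⟩⟩ |
    ⟨T, a, b, hT, ha, hb, hab, ⟨h1, h2, h2'⟩ | ⟨h2, h1, h1'⟩⟩
  · rcases fullA_v D huv hy h2 with rfl | rfl
    · exact (hx (Or.inl h1)).elim
    · exact (hx (Or.inr (Or.inl h1))).elim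
  · rw [fullA_e D he huv hy h2] at h1
    exact (hxe h1).elim
  · obtain ⟨h3, h4⟩ := fullA_t D hT huv hy h2
    exact (hx (Or.inr (Or.inr (Or.inr ⟨T, hT, h3, h4, h1⟩)))).elim
  · have := fullA_e D htb huv hy (D.endmap_subset _ _ htb h2)
    rcases Sym2.eq_iff.1 this with ⟨rfl, rfl⟩ | ⟨rfl, rfl⟩
    · exact ⟨t, a, Or.inl ⟨rfl, hab⟩, hta, h1⟩
    · exact ⟨t, a, Or.inr ⟨rfl, hab⟩, hta, h1⟩
  · have := fullA_e D htb huv hy (D.endmap_subset _ _ htb h2)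
    rcases Sym2.eq_iff.1 this with ⟨rfl, rfl⟩ | ⟨rfl, rfl⟩
    · exact (hx (Or.inl h1)).elim
    · exact (hx (Or.inr (Or.inl h1))).elim
  · have h3 := D.endmap_subset _ _ htb h1
    rcases fullA_v D huv hy h2 with rfl | rfl
    · exact ⟨t, b, Or.inl ⟨rfl, by rintro rfl; exact hxe h3⟩, htb, h1⟩
    · exact ⟨t, b, Or.inr ⟨rfl, by rintro rfl; exact hxe' h3⟩, htb, h1⟩
  · have := fullA_e D hab huv hy (D.endmap_subset _ _ hab h2)
    rcases Sym2.eq_iff.1 this with ⟨rfl, rfl⟩ | ⟨rfl, rfl⟩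
    · exact (hx (Or.inr (Or.inr (Or.inr ⟨T, hT, ha, hb, h1⟩)))).elim
    · exact (hx (Or.inr (Or.inr (Or.inr ⟨T, hT, hb, ha, h1⟩)))).elim
  · obtain ⟨h3, h4⟩ := fullA_t D hT huv hy h2
    have h5 := D.endmap_subset _ _ hab h1
    have h6 := D.endmap_subset _ _ hab.symm h1'
    rcases tri_pigeon hT ha hb h3 h4 hab.ne huv.ne with rfl | rfl | rfl | rfl
    · exact ⟨a, b, Or.inl ⟨rfl, by rintro rfl; exact hxe h5⟩, hab, h1⟩
    · exact ⟨a, b, Or.inr ⟨rfl, by rintro rfl; exact hxe' h5⟩, hab, h1⟩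
    · exact ⟨b, a, Or.inl ⟨rfl, by rintro rfl; exact hxe h6⟩, hab.symm, h1'⟩
    · exact ⟨b, a, Or.inr ⟨rfl, by rintro rfl; exact hxe' h6⟩, hab.symm, h1'⟩

/-- `P` meets `η(xa, x)` and `η(xb, x)` for two distinct edges. -/
def CrossE (D : ESD G H) (P : Set V) (x a : W) : Prop :=
  (∃ y ∈ P, y ∈ D.endmap x a) ∧ ∃ b, b ≠ a ∧ H.Adj x b ∧ ∃ y ∈ P, y ∈ D.endmap x b

theorem cross_of (D : ESD G H) {P : Set V} (hP : CutConn G P) {u v : W} (huv : H.Adj u v)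
    (hin : ∃ y ∈ P, y ∈ D.emap s(u, v)) {z : V} (hz : z ∈ P) {e : Sym2 W} (he : e ∈ H.edgeSet)
    (hze : z ∈ D.emap e) (hne : e ≠ s(u, v)) : CrossE D P u v ∨ CrossE D P v u := by
  let R : Set V := {x | x ∈ D.emap s(u, v) ∨
    (x ∈ D.vmap u ∧ ∃ y ∈ P, y ∈ D.endmap u v) ∨ (x ∈ D.vmap v ∧ ∃ y ∈ P, y ∈ D.endmap v u) ∨
    ∃ T, IsTriangle H T ∧ u ∈ T ∧ v ∈ T ∧ x ∈ D.tmap T ∧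
      ∃ y ∈ P, y ∈ D.endmap u v ∧ y ∈ D.endmap v u}
  have hzR : z ∉ R := by
    rintro (h | ⟨h, -⟩ | ⟨h, -⟩ | ⟨T, hT, -, -, h, -⟩)
    · exact hne (e_uniq D he huv hze h)
    · exact ve_no D he h hze
    · exact ve_no D he h hze
    · exact et_no D he hT hze h
  obtain ⟨y0, hy0, hy0e⟩ := hin
  obtain ⟨y, hyP, x, hxP, hyR, hxR, hyx⟩ := hP R ⟨y0, hy0, Or.inl hy0e⟩ ⟨z, hz, hzR⟩
  have hsub : R ⊆ FullA D u v := by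
    rintro a (h | ⟨h, -⟩ | ⟨h, -⟩ | ⟨T, hT, h1, h2, h, -⟩)
    · exact Or.inr (Or.inr (Or.inl h))
    · exact Or.inl h
    · exact Or.inr (Or.inl h)
    · exact Or.inr (Or.inr (Or.inr ⟨T, hT, h1, h2, h⟩))
  have hyA := hsub hyR
  have hxe : x ∉ D.emap s(u, v) := fun h => hxR (Or.inl h)
  have hxe' : x ∉ D.emap s(v, u) := by rwa [Sym2.eq_swap]
  -- y in a vertex set
  have yv : ∀ t, y ∈ D.vmap t → (t = u ∧ ∃ y ∈ P, y ∈ D.endmap u v) ∨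
      (t = v ∧ ∃ y ∈ P, y ∈ D.endmap v u) := by
    intro t ht
    rcases hyR with h | ⟨h, h'⟩ | ⟨h, h'⟩ | ⟨T, hT, h1, h2, h, -⟩
    · exact (ve_no D huv ht h).elim
    · exact Or.inl ⟨v_uniq D ht h, h'⟩
    · exact Or.inr ⟨v_uniq D ht h, h'⟩
    · exact (vt_no D hT ht h).elim
  have yt : ∀ T, IsTriangle H T → y ∈ D.tmap T → u ∈ T ∧ v ∈ T ∧
      ∃ y ∈ P, y ∈ D.endmap u v ∧ y ∈ D.endmap v u := by
    intro T hT ht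
    rcases hyR with h | ⟨h, h'⟩ | ⟨h, h'⟩ | ⟨T', hT', h1, h2, h, h'⟩
    · exact (et_no D huv hT h ht).elim
    · exact (vt_no D hT h ht).elim
    · exact (vt_no D hT h ht).elim
    · obtain rfl := t_uniq D hT hT' ht h
      exact ⟨h1, h2, h'⟩
  rcases D.edge_cond x y hyx.symm with ⟨t, h1, h2⟩ | ⟨e, he, h1, h2⟩ | ⟨T, hT, h1, h2⟩ |
    ⟨t, a, b, hta, htb, hab, h1, h2⟩ | ⟨t, b, htb, ⟨h1, h2⟩ | ⟨h2, h1⟩⟩ |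
    ⟨T, a, b, hT, ha, hb, hab, ⟨h1, h2, h2'⟩ | ⟨h2, h1, h1'⟩⟩
  · rcases yv t h2 with ⟨rfl, h⟩ | ⟨rfl, h⟩
    · exact (hxR (Or.inr (Or.inl ⟨h1, h⟩))).elim
    · exact (hxR (Or.inr (Or.inr (Or.inl ⟨h1, h⟩)))).elim
  · rw [fullA_e D he huv hyA h2] at h1
    exact (hxe h1).elim
  · obtain ⟨h3, h4, h5⟩ := yt T hT h2
    exact (hxR (Or.inr (Or.inr (Or.inr ⟨T, hT, h3, h4, h1, h5⟩)))).elim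
  · have := fullA_e D htb huv hyA (D.endmap_subset _ _ htb h2)
    rcases Sym2.eq_iff.1 this with ⟨rfl, rfl⟩ | ⟨rfl, rfl⟩
    · exact Or.inl ⟨⟨y, hyP, h2⟩, a, hab, hta, x, hxP, h1⟩
    · exact Or.inr ⟨⟨y, hyP, h2⟩, a, hab, hta, x, hxP, h1⟩
  · have := fullA_e D htb huv hyA (D.endmap_subset _ _ htb h2)
    rcases Sym2.eq_iff.1 this with ⟨rfl, rfl⟩ | ⟨rfl, rfl⟩
    · exact (hxR (Or.inr (Or.inl ⟨h1, y, hyP, h2⟩))).elim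
    · exact (hxR (Or.inr (Or.inr (Or.inl ⟨h1, y, hyP, h2⟩)))).elim
  · have h3 := D.endmap_subset _ _ htb h1
    rcases yv t h2 with ⟨rfl, h⟩ | ⟨rfl, h⟩
    · exact Or.inl ⟨h, b, by rintro rfl; exact hxe h3, htb, x, hxP, h1⟩
    · exact Or.inr ⟨h, b, by rintro rfl; exact hxe' h3, htb, x, hxP, h1⟩
  · have := fullA_e D hab huv hyA (D.endmap_subset _ _ hab h2)
    rcases Sym2.eq_iff.1 this with ⟨rfl, rfl⟩ | ⟨rfl, rfl⟩
    · exact (hxR (Or.inr (Or.inr (Or.inr ⟨T, hT, ha, hb, h1, y, hyP, h2, h2'⟩)))).elim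
    · exact (hxR (Or.inr (Or.inr (Or.inr ⟨T, hT, hb, ha, h1, y, hyP, h2', h2⟩)))).elim
  · obtain ⟨h3, h4, q, hqP, hq1, hq2⟩ := yt T hT h2
    have h5 := D.endmap_subset _ _ hab h1
    have h6 := D.endmap_subset _ _ hab.symm h1'
    rcases tri_pigeon hT ha hb h3 h4 hab.ne huv.ne with rfl | rfl | rfl | rfl
    · exact Or.inl ⟨⟨q, hqP, hq1⟩, b, by rintro rfl; exact hxe h5, hab, x, hxP, h1⟩
    · exact Or.inr ⟨⟨q, hqP, hq2⟩, b, by rintro rfl; exact hxe' h5, hab, x, hxP, h1⟩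
    · exact Or.inl ⟨⟨q, hqP, hq1⟩, a, by rintro rfl; exact hxe h6, hab.symm, x, hxP, h1'⟩
    · exact Or.inr ⟨⟨q, hqP, hq2⟩, a, by rintro rfl; exact hxe' h6, hab.symm, x, hxP, h1'⟩

/-- A connected set with a peripheral vertex. -/
def PerSet (D : ESD G H) (P : Set V) : Prop :=
  CutConn G P ∧ ∃ z ∈ P, Peripheral D z

/-- `P` visits the vertex `x`. -/
def Visits (D : ESD G H) (P : Set V) (x : W) : Prop :=
  ∃ a, H.Adj x a ∧ ∃ y ∈ P, y ∈ D.endmap x a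

theorem same_edge (D : ESD G H) {P Q : Set V} (hPQ : NonAdj G P Q) {x a b : W} (ha : H.Adj x a)
    (hb : H.Adj x b) (hp : ∃ y ∈ P, y ∈ D.endmap x a) (hq : ∃ y ∈ Q, y ∈ D.endmap x b) :
    a = b := by
  by_contra hne
  obtain ⟨y, hy, hy'⟩ := hp
  obtain ⟨y2, hy2, hy2'⟩ := hq
  exact hPQ y hy y2 hy2 (D.fully_adj x a b ha hb hne y hy' y2 hy2')

theorem not_cross (D : ESD G H) {P Q : Set V} (hPQ : NonAdj G P Q) {x a : W} (ha : H.Adj x a)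
    (hc : CrossE D P x a) (hq : Visits D Q x) : False := by
  obtain ⟨h1, b, hba, hb, h2⟩ := hc
  obtain ⟨c, hc, h3⟩ := hq
  exact hba ((same_edge D hPQ hb hc h2 h3).trans (same_edge D hPQ ha hc h1 h3).symm)

theorem nonAdj_symm {P Q : Set V} (h : NonAdj G P Q) : NonAdj G Q P :=
  fun x hx y hy hxy => h y hy x hx hxy.symm

theorem two_visit (D : ESD G H) {P Q : Set V} (hP : PerSet D P) (hQ : PerSet D Q)
    (hPQ : NonAdj G P Q) (hdis : Disjoint P Q) {v c d : W} (hc : H.Adj v c) (hd : H.Adj v d)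
    (hcd : c ≠ d) (hvP : Visits D P v) (hvQ : Visits D Q v) : False := by
  have hQP := nonAdj_symm hPQ
  obtain ⟨a, hva, hPa⟩ := id hvP
  obtain ⟨b, hvb, hQb⟩ := id hvQ
  obtain rfl := same_edge D hPQ hva hvb hPa hQb
  have emb : ∀ S : Set V, (∃ y ∈ S, y ∈ D.endmap v a) → ∃ y ∈ S, y ∈ D.emap s(v, a) := by
    rintro S ⟨y, hy, hy'⟩
    exact ⟨y, hy, D.endmap_subset _ _ hva hy'⟩
  -- each set either has its peripheral vertex on the leaf `a`, or crosses `a`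
  have key : ∀ S S' : Set V, PerSet D S → NonAdj G S S' → (∃ y ∈ S, y ∈ D.endmap v a) →
      Visits D S' v →
      (∃ z ∈ S, D.endmap a v = {z} ∧ ∀ u', H.Adj a u' → u' = v) ∨ CrossE D S a v := by
    rintro S S' ⟨hS, z, hz, w, u, hwu, hleaf, hend⟩ hSS hSv hS'
    have hzw : z ∈ D.emap s(w, u) := D.endmap_subset _ _ hwu (by rw [hend]; rfl)
    by_cases he : s(w, u) = s(v, a)
    · rcases Sym2.eq_iff.1 he with ⟨rfl, rfl⟩ | ⟨rfl, rfl⟩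
      · exact (hcd ((hleaf c hc).trans (hleaf d hd).symm)).elim
      · exact Or.inl ⟨z, hz, hend, hleaf⟩
    · rcases cross_of D hS hva (emb S hSv) hz hwu hzw he with h | h
      · exact (not_cross D hSS hva h hS').elim
      · exact Or.inr h
  have k1 := key P Q hP hPQ hPa hvQ
  have k2 := key Q P hQ hQP hQb hvP
  rcases k1 with ⟨z, hz, hend, hleaf⟩ | h1
  · rcases k2 with ⟨z', hz', hend', -⟩ | ⟨-, b, hb, hab, -⟩
    · have : z = z' := by
        have : z ∈ ({z'} : Set V) := by rw [← hend', hend]; rfl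
        exact this
      exact Set.disjoint_left.1 hdis hz (this ▸ hz')
    · exact hb (hleaf b hab)
  · rcases k2 with ⟨z', hz', hend', hleaf⟩ | h2
    · obtain ⟨-, b, hb, hab, -⟩ := h1
      exact hb (hleaf b hab)
    · exact not_cross D hPQ hva.symm h1 ⟨v, hva.symm, h2.1⟩

/-- How a set touches the full atom at the endpoint `x` of `xy`. -/
def At (D : ESD G H) (P : Set V) (x y : W) : Prop :=
  (∃ z ∈ P, D.endmap x y = {z}) ∨ ∃ b, b ≠ y ∧ H.Adj x b ∧ ∃ q ∈ P, q ∈ D.endmap x b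

theorem at_of_touch (D : ESD G H) {P : Set V} (hP : PerSet D P) {u v : W} (huv : H.Adj u v)
    (ht : Touches G (FullA D u v) P) : At D P u v ∨ At D P v u := by
  obtain ⟨hconn, z, hz, w, t, hwt, hleaf, hend⟩ := hP
  have hzw : z ∈ D.emap s(w, t) := D.endmap_subset _ _ hwt (by rw [hend]; rfl)
  by_cases hzA : z ∈ FullA D u v
  · rcases Sym2.eq_iff.1 (fullA_e D hwt huv hzA hzw) with ⟨rfl, rfl⟩ | ⟨rfl, rfl⟩
    · exact Or.inl (Or.inl ⟨z, hz, hend⟩)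
    · exact Or.inr (Or.inl ⟨z, hz, hend⟩)
  · have : ∃ x ∈ P, ∃ y, y ∈ FullA D u v ∧ x ∉ FullA D u v ∧ G.Adj x y := by
      by_cases hint : ∃ a ∈ P, a ∈ FullA D u v
      · obtain ⟨a, ha, b, hb, haA, hbA, hab⟩ := hconn _ hint ⟨z, hz, hzA⟩
        exact ⟨b, hb, a, haA, hbA, hab.symm⟩
      · obtain ⟨x, hx, y, hy, rfl | hxy⟩ := ht
        · exact (hint ⟨x, hy, hx⟩).elim
        · exact ⟨y, hy, x, hx, fun h => hint ⟨y, hy, h⟩, hxy.symm⟩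
    obtain ⟨x, hxP, y, hyA, hxA, hxy⟩ := this
    obtain ⟨a, b, ⟨rfl, hb⟩ | ⟨rfl, hb⟩, hab, hx⟩ := fullA_nbr D huv hxy hyA hxA
    · exact Or.inl (Or.inr ⟨b, hb, hab, x, hxP, hx⟩)
    · exact Or.inr (Or.inr ⟨b, hb, hab, x, hxP, hx⟩)

theorem at_visits (D : ESD G H) {P : Set V} {x y : W} (hxy : H.Adj x y) (h : At D P x y) :
    Visits D P x := by
  rcases h with ⟨z, hz, hend⟩ | ⟨b, -, hb, h⟩
  · exact ⟨y, hxy, z, hz, by rw [hend]; rfl⟩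
  · exact ⟨b, hb, h⟩

theorem at_at (D : ESD G H) {P Q : Set V} (hP : PerSet D P) (hQ : PerSet D Q)
    (hPQ : NonAdj G P Q) (hdis : Disjoint P Q) {x y : W} (hxy : H.Adj x y)
    (h1 : At D P x y) (h2 : At D Q x y) : False := by
  have v1 := at_visits D hxy h1
  have v2 := at_visits D hxy h2
  rcases h1 with ⟨z, hz, hend⟩ | ⟨b, hby, hb, -⟩
  · rcases h2 with ⟨z', hz', hend'⟩ | ⟨b, hby, hb, -⟩
    · have : z = z' := by
        have : z ∈ ({z'} : Set V) := by rw [← hend', hend]; rfl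
        exact this
      exact Set.disjoint_left.1 hdis hz (this ▸ hz')
    · exact two_visit D hP hQ hPQ hdis hb hxy hby v1 v2
  · exact two_visit D hP hQ hPQ hdis hb hxy hby v1 v2

theorem touches_mono {A B P : Set V} (h : A ⊆ B) (ht : Touches G A P) : Touches G B P := by
  obtain ⟨x, hx, r⟩ := ht
  exact ⟨x, h hx, r⟩

theorem isolated_no (D : ESD G H) {P : Set V} (hP : PerSet D P) {u : W} (hu : ∀ v, ¬ H.Adj u v)
    (ht : Touches G (D.vmap u) P) : False := by
  obtain ⟨hconn, z, hz, w, t, hwt, -, hend⟩ := hP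
  have hzw : z ∈ D.emap s(w, t) := D.endmap_subset _ _ hwt (by rw [hend]; rfl)
  have cl : ∀ x y, y ∈ D.vmap u → G.Adj x y → x ∈ D.vmap u := by
    intro x y hy hxy
    rcases D.edge_cond x y hxy with ⟨t, h1, h2⟩ | ⟨e, he, h1, h2⟩ | ⟨T, hT, h1, h2⟩ |
      ⟨t, a, b, hta, htb, hab, h1, h2⟩ | ⟨t, b, htb, ⟨h1, h2⟩ | ⟨h2, h1⟩⟩ |
      ⟨T, a, b, hT, ha, hb, hab, ⟨h1, h2, h2'⟩ | ⟨h2, h1, h1'⟩⟩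
    · rwa [v_uniq D hy h2]
    · exact (ve_no D he hy h2).elim
    · exact (vt_no D hT hy h2).elim
    · exact (ve_no D htb hy (D.endmap_subset _ _ htb h2)).elim
    · exact (ve_no D htb hy (D.endmap_subset _ _ htb h2)).elim
    · obtain rfl := v_uniq D hy h2
      exact (hu _ htb).elim
    · exact (ve_no D hab hy (D.endmap_subset _ _ hab h2)).elim
    · exact (vt_no D hT hy h2).elim
  have hint : ∃ a ∈ P, a ∈ D.vmap u := by
    obtain ⟨x, hx, y, hy, rfl | hxy⟩ := ht
    · exact ⟨x, hy, hx⟩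
    · exact ⟨y, hy, cl y x hx hxy.symm⟩
  obtain ⟨a, -, b, -, ha, hb, hab⟩ := hconn _ hint ⟨z, hz, fun h => ve_no D hwt h hzw⟩
  exact hb (cl b a ha hab.symm)

theorem atom_sub (D : ESD G H) (a : AtomLabel W) (ha : ValidAtom H a) :
    (∃ u v, H.Adj u v ∧ D.atomSet a ⊆ FullA D u v) ∨
    ∃ u, (∀ v, ¬ H.Adj u v) ∧ D.atomSet a = D.vmap u := by
  cases a with
  | bot e =>
    induction e using Sym2.ind with
    | _ u v => exact Or.inl ⟨u, v, ha, fun x hx => Or.inr (Or.inr (Or.inl hx.1))⟩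
  | half u v =>
    refine Or.inl ⟨u, v, ha, ?_⟩
    rintro x (hx | hx)
    · exact Or.inl hx
    · exact Or.inr (Or.inr (Or.inl hx.1))
  | full e =>
    induction e using Sym2.ind with
    | _ u v =>
      refine Or.inl ⟨u, v, ha, ?_⟩
      rintro x (((hx | hx) | hx) | hx)
      · exact Or.inl hx
      · exact Or.inr (Or.inl hx)
      · exact Or.inr (Or.inr (Or.inl hx))
      · simp only [Set.mem_iUnion] at hx
        obtain ⟨T, ⟨hT, hm⟩, hx⟩ := hx
        exact Or.inr (Or.inr (Or.inr ⟨T, hT, hm u (by simp), hm v (by simp), hx⟩))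
  | vert u =>
    by_cases h : ∃ v, H.Adj u v
    · obtain ⟨v, hv⟩ := h
      exact Or.inl ⟨u, v, hv, fun x hx => Or.inl hx⟩
    · exact Or.inr ⟨u, fun v hv => h ⟨v, hv⟩, rfl⟩
  | tri T =>
    obtain ⟨u, v, w, huv, -, -, hT⟩ := id ha
    exact Or.inl ⟨u, v, huv, fun x hx =>
      Or.inr (Or.inr (Or.inr ⟨T, ha, by simp [hT], by simp [hT], hx⟩))⟩

theorem perSet_path (D : ESD G H) {m : ℕ} {p : Fin (m + 1) → V} (h : InducedPathFun G p)
    (hp : Peripheral D (p 0) ∨ Peripheral D (p (Fin.last m))) : PerSet D (Set.range p) := by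
  refine ⟨cutConn_path h, ?_⟩
  rcases hp with hp | hp
  · exact ⟨_, ⟨_, rfl⟩, hp⟩
  · exact ⟨_, ⟨_, rfl⟩, hp⟩

end Helpers

/-- if `P₁, P₂, P₃` are pairwise vertex-disjoint, pairwise non-adjacent
induced paths in `G`, each having a peripheral endpoint in the extended strip
decomposition `(H, η)` of `G`, then no atom of `(H, η)` intersects or is adjacent to all
three of them. -/
theorem stmt11 {V W : Type} (G : SimpleGraph V) (H : SimpleGraph W) (D : ESD G H)
    (m₁ m₂ m₃ : ℕ) (p₁ : Fin (m₁ + 1) → V) (p₂ : Fin (m₂ + 1) → V) (p₃ : Fin (m₃ + 1) → V)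
    (h₁ : InducedPathFun G p₁) (h₂ : InducedPathFun G p₂) (h₃ : InducedPathFun G p₃)
    (hd₁₂ : Disjoint (Set.range p₁) (Set.range p₂))
    (hd₁₃ : Disjoint (Set.range p₁) (Set.range p₃))
    (hd₂₃ : Disjoint (Set.range p₂) (Set.range p₃))
    (ha₁₂ : NonAdj G (Set.range p₁) (Set.range p₂))
    (ha₁₃ : NonAdj G (Set.range p₁) (Set.range p₃))
    (ha₂₃ : NonAdj G (Set.range p₂) (Set.range p₃))
    (hp₁ : Peripheral D (p₁ 0) ∨ Peripheral D (p₁ (Fin.last m₁)))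
    (hp₂ : Peripheral D (p₂ 0) ∨ Peripheral D (p₂ (Fin.last m₂)))
    (hp₃ : Peripheral D (p₃ 0) ∨ Peripheral D (p₃ (Fin.last m₃))) :
    ∀ a : AtomLabel W, ValidAtom H a →
      ¬ (Touches G (D.atomSet a) (Set.range p₁) ∧ Touches G (D.atomSet a) (Set.range p₂) ∧
         Touches G (D.atomSet a) (Set.range p₃)) := by
  intro a ha ⟨t₁, t₂, t₃⟩
  have P1 := perSet_path D h₁ hp₁
  have P2 := perSet_path D h₂ hp₂
  have P3 := perSet_path D h₃ hp₃
  rcases atom_sub D a ha with ⟨u, v, huv, hs⟩ | ⟨u, hu, hs⟩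
  · have n12 := fun x y hxy => at_at D P1 P2 ha₁₂ hd₁₂ (x := x) (y := y) hxy
    have n13 := fun x y hxy => at_at D P1 P3 ha₁₃ hd₁₃ (x := x) (y := y) hxy
    have n23 := fun x y hxy => at_at D P2 P3 ha₂₃ hd₂₃ (x := x) (y := y) hxy
    have huv' := huv.symm
    rcases at_of_touch D P1 huv (touches_mono hs t₁) with q1 | q1 <;>
    rcases at_of_touch D P2 huv (touches_mono hs t₂) with q2 | q2 <;>
    rcases at_of_touch D P3 huv (touches_mono hs t₃) with q3 | q3 <;>
    first
      | exact n12 _ _ huv q1 q2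
      | exact n12 _ _ huv' q1 q2
      | exact n13 _ _ huv q1 q3
      | exact n13 _ _ huv' q1 q3
      | exact n23 _ _ huv q2 q3
      | exact n23 _ _ huv' q2 q3
  · rw [hs] at t₁
    exact isolated_no D P1 hu t₁

end Paper
end
end

section
/- Let (H,η) be an extended strip decomposition of a graph G and let Q be an induced path in G. Let W be a visit by Q of a feature f of (H,η) that is a vertex or a triangle of H, let W1 be the visit on Q directly before W and W2 the visit on Q directly after W (if they exist). Then W1 and W2, if existent, are visits of edges of H incident to f, and if both exist then they are visits of the same edge of H. -/
noncomputable section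

namespace Paper

/-- The set `η(f)` for a feature `f` of `(H, η)` that is a vertex (`Sum.inl`) or a
triangle (`Sum.inr`) of `H`. -/
def featureSet {V W : Type} {G : SimpleGraph V} {H : SimpleGraph W} (D : ESD G H) :
    W ⊕ Set W → Set V
  | Sum.inl u => D.vmap u
  | Sum.inr T => D.tmap T

/-- The edge `e` of `H` is incident to the feature `f` (a vertex or a triangle of `H`). -/
def FeatIncident {W : Type} : W ⊕ Set W → Sym2 W → Prop
  | Sum.inl u, e => u ∈ e
  | Sum.inr T, e => ∀ x ∈ e, x ∈ T

theorem aux_v {V W : Type} {G : SimpleGraph V} {H : SimpleGraph W} (D : ESD G H)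
    {x y : V} {v : W} (h : G.Adj x y) (hx : x ∈ D.vmap v) (hy : y ∉ D.vmap v) :
    ∃ u, H.Adj v u ∧ y ∈ D.endmap v u := by
  have hvv : ∀ u, x ∈ D.vmap u → u = v := fun u hu => by
    by_contra hne
    exact Set.disjoint_left.1 (D.disj_vv u v hne) hu hx
  have hve : ∀ e ∈ H.edgeSet, x ∉ D.emap e := fun e he =>
    Set.disjoint_left.1 (D.disj_ve v e he) hx
  have hvt : ∀ T, IsTriangle H T → x ∉ D.tmap T := fun T hT =>
    Set.disjoint_left.1 (D.disj_vt v T hT) hx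
  have hee : ∀ a b, H.Adj a b → x ∉ D.endmap a b := fun a b hab hh =>
    hve s(a, b) hab (D.endmap_subset a b hab hh)
  rcases D.edge_cond x y h with ⟨u, h1, h2⟩ | ⟨e, he, h1, h2⟩ | ⟨T, hT, h1, h2⟩ |
    ⟨w, u, u', a1, a2, hne, h1, h2⟩ | ⟨w, u, a1, ⟨h1, h2⟩ | ⟨h1, h2⟩⟩ |
    ⟨T, u, u', hT, hu, hu', a1, ⟨h1, h2⟩ | ⟨h1, h2⟩⟩
  · exact absurd (hvv u h1 ▸ h2) hy
  · exact absurd h1 (hve e he)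
  · exact absurd h1 (hvt T hT)
  · exact absurd h1 (hee _ _ a1)
  · obtain rfl := hvv w h1
    exact ⟨u, a1, h2⟩
  · exact absurd h2 (hee _ _ a1)
  · exact absurd h1 (hvt T hT)
  · exact absurd h2.1 (hee _ _ a1)

theorem aux_t {V W : Type} {G : SimpleGraph V} {H : SimpleGraph W} (D : ESD G H)
    {x y : V} {T : Set W} (hT : IsTriangle H T)
    (h : G.Adj x y) (hx : x ∈ D.tmap T) (hy : y ∉ D.tmap T) :
    ∃ u u', u ∈ T ∧ u' ∈ T ∧ H.Adj u u' ∧ y ∈ D.endmap u u' ∧ y ∈ D.endmap u' u := by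
  have hvv : ∀ u, x ∉ D.vmap u := fun u hu =>
    Set.disjoint_left.1 (D.disj_vt u T hT) hu hx
  have hve : ∀ e ∈ H.edgeSet, x ∉ D.emap e := fun e he hh =>
    Set.disjoint_left.1 (D.disj_et e T he hT) hh hx
  have hvt : ∀ T', IsTriangle H T' → x ∈ D.tmap T' → T' = T := fun T' hT' hh => by
    by_contra hne
    exact Set.disjoint_left.1 (D.disj_tt T' T hT' hT hne) hh hx
  have hee : ∀ a b, H.Adj a b → x ∉ D.endmap a b := fun a b hab hh =>
    hve s(a, b) hab (D.endmap_subset a b hab hh)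
  rcases D.edge_cond x y h with ⟨u, h1, h2⟩ | ⟨e, he, h1, h2⟩ | ⟨T', hT', h1, h2⟩ |
    ⟨w, u, u', a1, a2, hne, h1, h2⟩ | ⟨w, u, a1, ⟨h1, h2⟩ | ⟨h1, h2⟩⟩ |
    ⟨T', u, u', hT', hu, hu', a1, ⟨h1, h2⟩ | ⟨h1, h2⟩⟩
  · exact absurd h1 (hvv u)
  · exact absurd h1 (hve e he)
  · exact absurd (hvt T' hT' h1 ▸ h2) hy
  · exact absurd h1 (hee _ _ a1)
  · exact absurd h1 (hvv w)
  · exact absurd h2 (hee _ _ a1)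
  · obtain rfl := hvt T' hT' h1
    exact ⟨u, u', hu, hu', a1, h2.1, h2.2⟩
  · exact absurd h2.1 (hee _ _ a1)

theorem aux_one {V W : Type} {G : SimpleGraph V} {H : SimpleGraph W} (D : ESD G H)
    (f : W ⊕ Set W) (hf : ∀ T, f = Sum.inr T → IsTriangle H T) {x y : V}
    (h : G.Adj x y) (hx : x ∈ featureSet D f) (hy : y ∉ featureSet D f) :
    ∃ e ∈ H.edgeSet, y ∈ D.emap e ∧ FeatIncident f e := by
  rcases f with v | T
  · obtain ⟨u, hu, hyu⟩ := aux_v D h hx hy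
    exact ⟨s(v, u), hu, D.endmap_subset _ _ hu hyu, by simp [FeatIncident]⟩
  · obtain ⟨u, u', hu, hu', ha, h1, h2⟩ := aux_t D (hf T rfl) h hx hy
    exact ⟨s(u, u'), ha, D.endmap_subset _ _ ha h1, by simp [FeatIncident, hu, hu']⟩

theorem aux_two {V W : Type} {G : SimpleGraph V} {H : SimpleGraph W} (D : ESD G H)
    (f : W ⊕ Set W) (hf : ∀ T, f = Sum.inr T → IsTriangle H T) {x y x' y' : V}
    (h : G.Adj x y) (hx : x ∈ featureSet D f) (hy : y ∉ featureSet D f)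
    (h' : G.Adj x' y') (hx' : x' ∈ featureSet D f) (hy' : y' ∉ featureSet D f)
    (hn : ¬ G.Adj y y') :
    ∃ e ∈ H.edgeSet, y ∈ D.emap e ∧ y' ∈ D.emap e ∧ FeatIncident f e := by
  have key : ∀ v a b, H.Adj v a → H.Adj v b → y ∈ D.endmap v a → y' ∈ D.endmap v b → a = b := by
    intro v a b ha hb h1 h2
    by_contra hne
    exact hn (D.fully_adj v a b ha hb hne _ h1 _ h2)
  rcases f with v | T
  · obtain ⟨u, hu, hyu⟩ := aux_v D h hx hy
    obtain ⟨u', hu', hyu'⟩ := aux_v D h' hx' hy'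
    obtain rfl := key v u u' hu hu' hyu hyu'
    exact ⟨s(v, u), hu, D.endmap_subset _ _ hu hyu, D.endmap_subset _ _ hu hyu',
      by simp [FeatIncident]⟩
  · obtain ⟨a, b, ha, hb, hab, h1, h2⟩ := aux_t D (hf T rfl) h hx hy
    obtain ⟨c, d, hc, hd, hcd, h3, h4⟩ := aux_t D (hf T rfl) h' hx' hy'
    have hsh : a = c ∨ a = d ∨ b = c ∨ b = d := by
      obtain ⟨t1, t2, t3, -, -, -, rfl⟩ := hf T rfl
      have n1 := hab.ne
      have n2 := hcd.ne
      simp only [Set.mem_insert_iff, Set.mem_singleton_iff] at ha hb hc hd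
      grind
    have he : y' ∈ D.emap s(a, b) := by
      rcases hsh with rfl | rfl | rfl | rfl
      · obtain rfl := key _ _ _ hab hcd h1 h3
        exact D.endmap_subset _ _ hab h3
      · obtain rfl := key _ _ _ hab hcd.symm h1 h4
        exact D.endmap_subset _ _ hab h4
      · obtain rfl := key _ _ _ hab.symm hcd h2 h3
        exact D.endmap_subset _ _ hab h4
      · obtain rfl := key _ _ _ hab.symm hcd.symm h2 h4
        exact D.endmap_subset _ _ hab h3
    exact ⟨s(a, b), hab, D.endmap_subset _ _ hab h1, he, by simp [FeatIncident, ha, hb]⟩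

/-- let `Q = (p 0, …, p (m-1))` be an induced path in `G` and let
`W = (p i, …, p j)` be a visit by `Q` of a feature `f` of the extended strip
decomposition `(H, η)` that is a vertex or a triangle of `H` (so the vertices
`p i, …, p j` all lie in `η(f)`, and the visit is maximal).  Then the visit directly
before `W` (containing `p (i-1)`, if `i > 0`) and the visit directly after `W`
(containing `p (j+1)`, if `j + 1 < m`) are visits of edges of `H` incident to `f`;
moreover if both exist, they are visits of the same edge of `H`. -/
theorem stmt12 {V W : Type} (G : SimpleGraph V) (H : SimpleGraph W) (D : ESD G H)
    (m : ℕ) (p : Fin m → V) (hp : InducedPathFun G p)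
    (f : W ⊕ Set W) (hf : ∀ T, f = Sum.inr T → IsTriangle H T)
    (i j : ℕ) (hij : i ≤ j) (hjm : j < m)
    (hin : ∀ l, ∀ hl : l < m, i ≤ l → l ≤ j → p ⟨l, hl⟩ ∈ featureSet D f)
    (hmax₁ : 0 < i → p ⟨i - 1, by omega⟩ ∉ featureSet D f)
    (hmax₂ : ∀ hj1 : j + 1 < m, p ⟨j + 1, hj1⟩ ∉ featureSet D f) :
    (∀ hi : 0 < i, ∃ e ∈ H.edgeSet, p ⟨i - 1, by omega⟩ ∈ D.emap e ∧ FeatIncident f e) ∧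
    (∀ hj1 : j + 1 < m, ∃ e ∈ H.edgeSet, p ⟨j + 1, hj1⟩ ∈ D.emap e ∧ FeatIncident f e) ∧
    (0 < i → ∀ hj1 : j + 1 < m, ∃ e ∈ H.edgeSet,
      p ⟨i - 1, by omega⟩ ∈ D.emap e ∧ p ⟨j + 1, hj1⟩ ∈ D.emap e ∧ FeatIncident f e) := by
  have A1 : ∀ hi : 0 < i, G.Adj (p ⟨i, by omega⟩) (p ⟨i - 1, by omega⟩) := fun hi =>
    (hp.2 _ _).2 (Or.inr (by simp only; omega))
  have A2 : ∀ hj1 : j + 1 < m, G.Adj (p ⟨j, hjm⟩) (p ⟨j + 1, hj1⟩) := fun hj1 =>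
    (hp.2 _ _).2 (Or.inl rfl)
  have M1 := hin i (by omega) le_rfl hij
  have M2 := hin j hjm hij le_rfl
  refine ⟨fun hi => aux_one D f hf (A1 hi) M1 (hmax₁ hi),
    fun hj1 => aux_one D f hf (A2 hj1) M2 (hmax₂ hj1),
    fun hi hj1 => aux_two D f hf (A1 hi) M1 (hmax₁ hi) (A2 hj1) M2 (hmax₂ hj1) ?_⟩
  rw [hp.2]
  simp only
  omega

end Paper
end
end

section
/- Let (H,η) be an extended strip decomposition of a graph G. Suppose Q1 and Q2 are two induced paths in G that are vertex-disjoint and non-adjacent, such that Q1 has an endpoint z1 and Q2 has an endpoint z2 with both z1 and z2 peripheral in (H,η). Then there does not exist an edge uv of H such that both Q1 and Q2 intersect η(uv, u). -/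
noncomputable section

namespace Paper

def InA {V W : Type} {G : SimpleGraph V} {H : SimpleGraph W} (D : ESD G H) (u v : W) (y : V) : Prop :=
  y ∈ D.vmap u ∨ y ∈ D.vmap v ∨ y ∈ D.emap s(u, v) ∨
    ∃ T, IsTriangle H T ∧ u ∈ T ∧ v ∈ T ∧ y ∈ D.tmap T

theorem inA_e {V W : Type} {G : SimpleGraph V} {H : SimpleGraph W} (D : ESD G H) {u v : W}
    (huv : H.Adj u v) {y : V} (h : InA D u v y) {a b : W} (hab : H.Adj a b)
    (hy : y ∈ D.emap s(a, b)) : s(a, b) = s(u, v) := by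
  by_contra hne
  rcases h with h | h | h | ⟨T, hT, _, _, h⟩
  · exact Set.disjoint_left.1 (D.disj_ve u s(a, b) hab) h hy
  · exact Set.disjoint_left.1 (D.disj_ve v s(a, b) hab) h hy
  · exact Set.disjoint_left.1 (D.disj_ee _ _ hab huv hne) hy h
  · exact Set.disjoint_left.1 (D.disj_et _ _ hab hT) hy h

theorem inA_v {V W : Type} {G : SimpleGraph V} {H : SimpleGraph W} (D : ESD G H) {u v : W}
    (huv : H.Adj u v) {y : V} (h : InA D u v y) {a : W}
    (hy : y ∈ D.vmap a) : a = u ∨ a = v := by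
  by_contra hne
  push Not at hne
  rcases h with h | h | h | ⟨T, hT, _, _, h⟩
  · exact Set.disjoint_left.1 (D.disj_vv _ _ hne.1) hy h
  · exact Set.disjoint_left.1 (D.disj_vv _ _ hne.2) hy h
  · exact Set.disjoint_left.1 (D.disj_ve a s(u, v) huv) hy h
  · exact Set.disjoint_left.1 (D.disj_vt _ _ hT) hy h

theorem inA_t {V W : Type} {G : SimpleGraph V} {H : SimpleGraph W} (D : ESD G H) {u v : W}
    (huv : H.Adj u v) {y : V} (h : InA D u v y) {T : Set W} (hT : IsTriangle H T)
    (hy : y ∈ D.tmap T) : u ∈ T ∧ v ∈ T := by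
  rcases h with h | h | h | ⟨T', hT', hu, hv, h⟩
  · exact (Set.disjoint_left.1 (D.disj_vt _ _ hT) h hy).elim
  · exact (Set.disjoint_left.1 (D.disj_vt _ _ hT) h hy).elim
  · exact (Set.disjoint_left.1 (D.disj_et s(u, v) _ huv hT) h hy).elim
  · by_cases e : T = T'
    · subst e; exact ⟨hu, hv⟩
    · exact (Set.disjoint_left.1 (D.disj_tt _ _ hT hT' e) hy h).elim

theorem step_in {V W : Type} {G : SimpleGraph V} {H : SimpleGraph W} (D : ESD G H) {u v : W}
    (huv : H.Adj u v) {x y : V} (hx : ¬ InA D u v x) (hy : InA D u v y) (hxy : G.Adj x y) :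
    ∃ w w', (w = u ∨ w = v) ∧ H.Adj w w' ∧ s(w, w') ≠ s(u, v) ∧ x ∈ D.endmap w w' := by
  have key : ∀ a b, H.Adj a b → x ∈ D.endmap a b → s(a, b) ≠ s(u, v) := by
    intro a b hab hxa he
    exact hx (Or.inr (Or.inr (Or.inl (he ▸ D.endmap_subset a b hab hxa))))
  have keyv : ∀ a, x ∈ D.vmap a → ¬ (a = u ∨ a = v) := by
    rintro a h (rfl | rfl)
    · exact hx (Or.inl h)
    · exact hx (Or.inr (Or.inl h))
  rcases D.edge_cond x y hxy with ⟨c, h1, h2⟩ | ⟨e, he, h1, h2⟩ | ⟨T, hT, h1, h2⟩ |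
    ⟨c, a, b, hca, hcb, hab, h1, h2⟩ | ⟨c, d, hcd, ⟨h1, h2⟩ | ⟨h1, h2⟩⟩ |
    ⟨T, a, b, hT, haT, hbT, hab, ⟨h1, h2⟩ | ⟨h1, h2⟩⟩
  · exact (keyv c h1 (inA_v D huv hy h2)).elim
  · induction e using Sym2.ind with
    | _ a b =>
      have := inA_e D huv hy he h2
      exact (hx (Or.inr (Or.inr (Or.inl (this ▸ h1))))).elim
  · obtain ⟨p, q⟩ := inA_t D huv hy hT h2
    exact (hx (Or.inr (Or.inr (Or.inr ⟨T, hT, p, q, h1⟩)))).elim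
  · have := inA_e D huv hy hcb (D.endmap_subset _ _ hcb h2)
    refine ⟨c, a, ?_, hca, key _ _ hca h1, h1⟩
    rcases Sym2.eq_iff.1 this with h | h
    · exact Or.inl h.1
    · exact Or.inr h.1
  · have := inA_e D huv hy hcd (D.endmap_subset _ _ hcd h2)
    refine (keyv c h1 ?_).elim
    rcases Sym2.eq_iff.1 this with h | h
    · exact Or.inl h.1
    · exact Or.inr h.1
  · exact ⟨c, d, inA_v D huv hy h1, hcd, key _ _ hcd h2, h2⟩
  · have := inA_e D huv hy hab (D.endmap_subset _ _ hab h2.1)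
    refine (hx (Or.inr (Or.inr (Or.inr ⟨T, hT, ?_, ?_, h1⟩)))).elim
    · rcases Sym2.eq_iff.1 this with h | h
      · exact h.1 ▸ haT
      · exact h.2 ▸ hbT
    · rcases Sym2.eq_iff.1 this with h | h
      · exact h.2 ▸ hbT
      · exact h.1 ▸ haT
  · obtain ⟨p, q⟩ := inA_t D huv hy hT h1
    have h3 : (a = u ∨ a = v) ∨ (b = u ∨ b = v) := by
      obtain ⟨t1, t2, t3, _, _, _, rfl⟩ := hT
      have n1 := hab.ne
      have n2 := huv.ne
      simp only [Set.mem_insert_iff, Set.mem_singleton_iff] at p q haT hbT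
      grind
    rcases h3 with h3 | h3
    · exact ⟨a, b, h3, hab, key _ _ hab h2.1, h2.1⟩
    · exact ⟨b, a, h3, hab.symm, key _ _ hab.symm h2.2, h2.2⟩

theorem path_in {V W : Type} {G : SimpleGraph V} {H : SimpleGraph W} (D : ESD G H) {u v a b : W}
    (huv : H.Adj u v) (hab : H.Adj a b) (hne : s(a, b) ≠ s(u, v)) (f : ℕ → V) (i : ℕ)
    (hf : ∀ k < i, G.Adj (f k) (f (k + 1))) (h0 : f 0 ∈ D.endmap a b)
    (hi : f i ∈ D.endmap u v) :
    ∃ k < i, ∃ w w', (w = u ∨ w = v) ∧ H.Adj w w' ∧ s(w, w') ≠ s(u, v) ∧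
      f k ∈ D.endmap w w' := by
  have n0 : ¬ InA D u v (f 0) := fun h => hne (inA_e D huv h hab (D.endmap_subset _ _ hab h0))
  have ni : InA D u v (f i) := Or.inr (Or.inr (Or.inl (D.endmap_subset _ _ huv hi)))
  by_contra hcon
  have : ∀ k ≤ i, ¬ InA D u v (f k) := by
    intro k
    induction k with
    | zero => exact fun _ => n0
    | succ k ih =>
      intro hk hin
      exact hcon ⟨k, hk, step_in D huv (ih (by omega)) hin (hf k hk)⟩
  exact this i le_rfl ni

theorem mainAux {V W : Type} {G : SimpleGraph V} {H : SimpleGraph W} (D : ESD G H)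
    (S₁ S₂ : Set V) (hd : Disjoint S₁ S₂) (ha : NonAdj G S₁ S₂) (f g : ℕ → V) (m₁ m₂ : ℕ)
    (hf : ∀ k < m₁, G.Adj (f k) (f (k + 1))) (hg : ∀ k < m₂, G.Adj (g k) (g (k + 1)))
    (hfS : ∀ k, f k ∈ S₁) (hgS : ∀ k, g k ∈ S₂)
    (hpf : Peripheral D (f 0)) (hpg : Peripheral D (g 0)) :
    ∀ (i : ℕ) (j : ℕ) (u v : W), i ≤ m₁ → j ≤ m₂ → H.Adj u v → f i ∈ D.endmap u v →
      g j ∈ D.endmap u v → False := by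
  have hne : ∀ k l, f k ≠ g l := fun k l h => Set.disjoint_left.1 hd (hfS k) (h ▸ hgS l)
  have hna : ∀ k l, ¬ G.Adj (f k) (g l) := fun k l => ha _ (hfS k) _ (hgS l)
  obtain ⟨w₁, u₁, hw₁, hu₁, hz₁⟩ := hpf
  obtain ⟨w₂, u₂, hw₂, hu₂, hz₂⟩ := hpg
  have e₁ : f 0 ∈ D.endmap w₁ u₁ := by rw [hz₁]; rfl
  have e₂ : g 0 ∈ D.endmap w₂ u₂ := by rw [hz₂]; rfl
  intro i
  induction i using Nat.strong_induction_on with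
  | _ i ih =>
  intro j u v hi hj huv hfi hgj
  -- no other edge at `u`
  have A1 : ∀ k w', H.Adj u w' → s(u, w') ≠ s(u, v) → f k ∈ D.endmap u w' → False := by
    intro k w' hw hn hk
    exact hna k j (D.fully_adj u w' v hw huv (fun h => hn (by rw [h])) _ hk _ hgj)
  have A2 : ∀ k w', H.Adj u w' → s(u, w') ≠ s(u, v) → g k ∈ D.endmap u w' → False := by
    intro k w' hw hn hk
    exact hna i k (D.fully_adj u v w' huv hw (fun h => hn (by rw [h])) _ hfi _ hk)
  have B1 : s(w₁, u₁) ≠ s(u, v) → ∃ k < i, ∃ w', H.Adj v w' ∧ s(v, w') ≠ s(u, v) ∧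
      f k ∈ D.endmap v w' := by
    intro h
    obtain ⟨k, hk, w, w', rfl | rfl, h1, h2, h3⟩ :=
      path_in D huv hw₁ h f i (fun k hk => hf k (by omega)) e₁ hfi
    · exact (A1 k w' h1 h2 h3).elim
    · exact ⟨k, hk, w', h1, h2, h3⟩
  have B2 : s(w₂, u₂) ≠ s(u, v) → ∃ k < j, ∃ w', H.Adj v w' ∧ s(v, w') ≠ s(u, v) ∧
      g k ∈ D.endmap v w' := by
    intro h
    obtain ⟨k, hk, w, w', rfl | rfl, h1, h2, h3⟩ :=
      path_in D huv hw₂ h g j (fun k hk => hg k (by omega)) e₂ hgj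
    · exact (A2 k w' h1 h2 h3).elim
    · exact ⟨k, hk, w', h1, h2, h3⟩
  -- if the first peripheral edge is `uv` then `v = w₁`
  have C1 : s(w₁, u₁) = s(u, v) → w₁ = v ∧ u₁ = u := by
    intro h
    rcases Sym2.eq_iff.1 h with ⟨rfl, rfl⟩ | h
    · rw [hz₁] at hgj
      exact (hne 0 j hgj.symm).elim
    · exact h
  have C2 : s(w₂, u₂) = s(u, v) → w₂ = v ∧ u₂ = u := by
    intro h
    rcases Sym2.eq_iff.1 h with ⟨rfl, rfl⟩ | h
    · rw [hz₂] at hfi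
      exact (hne i 0 hfi).elim
    · exact h
  by_cases c₁ : s(w₁, u₁) = s(u, v)
  · obtain ⟨rfl, rfl⟩ := C1 c₁
    by_cases c₂ : s(w₂, u₂) = s(u₁, w₁)
    · obtain ⟨rfl, rfl⟩ := C2 c₂
      rw [hz₁] at e₂
      exact hne 0 0 e₂.symm
    · obtain ⟨k, _, w', h1, h2, _⟩ := B2 c₂
      rw [hu₁ w' h1] at h2
      exact h2 c₁
  · obtain ⟨k, hk, w', h1, h2, h3⟩ := B1 c₁
    by_cases c₂ : s(w₂, u₂) = s(u, v)
    · obtain ⟨rfl, rfl⟩ := C2 c₂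
      rw [hu₂ w' h1] at h2
      exact h2 c₂
    · obtain ⟨l, hl, w'', h1', h2', h3'⟩ := B2 c₂
      by_cases hw : w' = w''
      · subst hw
        exact ih k hk l v w' (by omega) (by omega) h1 h3 h3'
      · exact hna k l (D.fully_adj v w' w'' h1 h1' hw _ h3 _ h3')

theorem toSeq {V W : Type} {G : SimpleGraph V} {H : SimpleGraph W} (D : ESD G H) (m : ℕ)
    (p : Fin (m + 1) → V) (h : InducedPathFun G p)
    (hp : Peripheral D (p 0) ∨ Peripheral D (p (Fin.last m))) :
    ∃ f : ℕ → V, (∀ k < m, G.Adj (f k) (f (k + 1))) ∧ (∀ k, f k ∈ Set.range p) ∧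
      Peripheral D (f 0) ∧ ∀ x ∈ Set.range p, ∃ k ≤ m, f k = x := by
  rcases hp with hp | hp
  · refine ⟨fun k => p (Fin.ofNat (m + 1) k), ?_, fun k => ⟨_, rfl⟩, hp, ?_⟩
    · intro k hk
      refine (h.2 _ _).2 (Or.inl ?_)
      simp only [Fin.ofNat]
      rw [Nat.mod_eq_of_lt (by omega), Nat.mod_eq_of_lt (by omega)]
    · rintro _ ⟨i, rfl⟩
      refine ⟨i, by omega, ?_⟩
      refine congrArg p (Fin.ext ?_)
      simp only [Fin.ofNat]
      exact Nat.mod_eq_of_lt i.2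
  · refine ⟨fun k => p ⟨m - k, by omega⟩, ?_, fun k => ⟨_, rfl⟩, hp, ?_⟩
    · intro k hk
      refine (h.2 _ _).2 (Or.inr ?_)
      simp only
      omega
    · rintro _ ⟨i, rfl⟩
      refine ⟨m - i, by omega, ?_⟩
      refine congrArg p (Fin.ext ?_)
      simp only
      omega

/-- if `Q₁` and `Q₂` are vertex-disjoint, non-adjacent induced paths in `G`,
each having a peripheral endpoint in the extended strip decomposition `(H, η)` of `G`,
then there is no edge `uv` of `H` such that both `Q₁` and `Q₂` intersect `η(uv, u)`. -/
theorem stmt13 {V W : Type} (G : SimpleGraph V) (H : SimpleGraph W) (D : ESD G H)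
    (m₁ m₂ : ℕ) (p₁ : Fin (m₁ + 1) → V) (p₂ : Fin (m₂ + 1) → V)
    (h₁ : InducedPathFun G p₁) (h₂ : InducedPathFun G p₂)
    (hd : Disjoint (Set.range p₁) (Set.range p₂))
    (ha : NonAdj G (Set.range p₁) (Set.range p₂))
    (hp₁ : Peripheral D (p₁ 0) ∨ Peripheral D (p₁ (Fin.last m₁)))
    (hp₂ : Peripheral D (p₂ 0) ∨ Peripheral D (p₂ (Fin.last m₂))) :
    ∀ u v : W, H.Adj u v →
      ¬ ((Set.range p₁ ∩ D.endmap u v).Nonempty ∧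
         (Set.range p₂ ∩ D.endmap u v).Nonempty) := by
  rintro u v huv ⟨⟨x, hx, hx'⟩, ⟨y, hy, hy'⟩⟩
  obtain ⟨f, hf, hfS, hpf, hfx⟩ := toSeq D m₁ p₁ h₁ hp₁
  obtain ⟨g, hg, hgS, hpg, hgx⟩ := toSeq D m₂ p₂ h₂ hp₂
  obtain ⟨i, hi, rfl⟩ := hfx x hx
  obtain ⟨j, hj, rfl⟩ := hgx y hy
  exact mainAux D _ _ hd ha f g m₁ m₂ hf hg hfS hgS hpf hpg i j u v hi hj huv hx' hy'

end Paper
end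
end

section
/- For every real ξ ∈ (0,1) and all reals k and n with e^{1/ξ} < k ≤ n, it holds that n^{1−ξ}·(1 + ln n) − k^{1−ξ}·(1 + ln k) ≥ (n − k) · n^{−ξ} · ((1−ξ)·(1 + ln n) + 1). -/
namespace Paper

/-- for every real `ξ ∈ (0,1)` and all reals `k`, `n` with
`e^{1/ξ} < k ≤ n`, one has
`n^{1-ξ}·(1 + ln n) - k^{1-ξ}·(1 + ln k) ≥ (n - k)·n^{-ξ}·((1-ξ)·(1 + ln n) + 1)`. -/
theorem stmt18 (ξ k n : ℝ) (hξ0 : 0 < ξ) (hξ1 : ξ < 1)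
    (hk : Real.exp (1 / ξ) < k) (hkn : k ≤ n) :
    (n - k) * n ^ (-ξ) * ((1 - ξ) * (1 + Real.log n) + 1) ≤
      n ^ (1 - ξ) * (1 + Real.log n) - k ^ (1 - ξ) * (1 + Real.log k) := by
  have hk0 : 0 < k := (Real.exp_pos _).trans hk
  rcases hkn.eq_or_lt with h | hlt
  · subst h; simp
  have hder : ∀ x : ℝ, 0 < x → HasDerivAt (fun x : ℝ => x ^ (1 - ξ) * (1 + Real.log x))
      (x ^ (-ξ) * ((1 - ξ) * (1 + Real.log x) + 1)) x := by
    intro x hx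
    have h1 := Real.hasDerivAt_rpow_const (x := x) (p := 1 - ξ) (Or.inl hx.ne')
    have h2 := (Real.hasDerivAt_log hx.ne').const_add 1
    have h3 := h1.mul h2
    refine h3.congr_deriv ?_
    have e1 : (1 - ξ - 1 : ℝ) = -ξ := by ring
    have e2 : x ^ (1 - ξ) = x * x ^ (-ξ) := by
      rw [sub_eq_add_neg, Real.rpow_add hx, Real.rpow_one]
    rw [e1, e2]
    field_simp
  obtain ⟨c, hc, hce⟩ := exists_hasDerivAt_eq_slope
    (fun x : ℝ => x ^ (1 - ξ) * (1 + Real.log x))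
    (fun x : ℝ => x ^ (-ξ) * ((1 - ξ) * (1 + Real.log x) + 1)) hlt
    (fun x hx => (hder x (hk0.trans_le hx.1)).continuousAt.continuousWithinAt)
    (fun x hx => hder x (hk0.trans hx.1))
  have hnk : 0 < n - k := sub_pos.2 hlt
  rw [eq_div_iff hnk.ne'] at hce
  have hc0 : 0 < c := hk0.trans hc.1
  have hn0 : 0 < n := hk0.trans hlt
  have hlc : 1 < ξ * Real.log c := by
    have : 1 / ξ < Real.log c := (Real.lt_log_iff_exp_lt hc0).2 (hk.trans hc.1)
    rw [div_lt_iff₀ hξ0] at this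
    linarith
  have hlcn : Real.log c < Real.log n := Real.log_lt_log hc0 hc.2
  have key : n ^ (-ξ) * ((1 - ξ) * (1 + Real.log n) + 1) ≤
      c ^ (-ξ) * ((1 - ξ) * (1 + Real.log c) + 1) := by
    have e : c ^ (-ξ) = n ^ (-ξ) * Real.exp (ξ * (Real.log n - Real.log c)) := by
      rw [Real.rpow_def_of_pos hc0, Real.rpow_def_of_pos hn0, ← Real.exp_add]
      congr 1; ring
    rw [e, mul_assoc]
    refine mul_le_mul_of_nonneg_left ?_ (Real.rpow_nonneg hn0.le _)
    have hexp := Real.add_one_le_exp (ξ * (Real.log n - Real.log c))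
    have hl0 : 0 < Real.log c := by
      by_contra hh
      nlinarith
    have hA : 0 ≤ (1 - ξ) * (1 + Real.log c) + 1 := by
      have : 0 < (1 - ξ) * (1 + Real.log c) := mul_pos (by linarith) (by linarith)
      linarith
    refine le_trans ?_ (mul_le_mul_of_nonneg_right hexp hA)
    have hB : (1 - ξ) ≤ ξ * ((1 - ξ) * (1 + Real.log c) + 1) := by
      nlinarith [mul_pos (sub_pos.2 hξ1) (sub_pos.2 hlc), mul_pos hξ0 (sub_pos.2 hξ1)]
    nlinarith [mul_le_mul_of_nonneg_right hB (sub_pos.2 hlcn).le]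
  have := mul_le_mul_of_nonneg_left key hnk.le
  linarith

end Paper
end
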